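/- Let p be a prime number and n ≥ 1 an integer. Suppose Φ_n = F_1 · F_2 ⋯ F_t is the factorization of the n-th cyclotomic polynomial into monic irreducible polynomials over ℚ_p. For each i set G_i = F_i(X^p) if p ∣ n, and G_i = F_i(X^p)/F_i(X) if p ∤ n. Then Φ_{np} = G_1 · G_2 ⋯ G_t, and this is the factorization of Φ_{np} into monic irreducible polynomials over ℚ_p. -/

import Mathlib

open Polynomial

/-!
Of `ℤ_p` and `ℚ_p` the argument uses a Dedekind domain `A` in which `p` is prime, a homomorphism
`A → 𝔽_p`, and the fraction field `K` of `A`.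

If `p ∤ n` and `X ^ n - 1 = F H` with `F` irreducible, then `F ∣ F(X ^ p)`: otherwise
`F ∣ H(X ^ p)`, which is `H ^ p` modulo `p`, although `X ^ n - 1` is separable modulo `p`. The
product formula follows from `Φ_n(X ^ p) = Φ_{np}` if `p ∣ n` and `Φ_n(X ^ p) = Φ_{np} Φ_n` if not.

For irreducibility, every irreducible factor of `Φ_n` over `K` has degree `[K(ζ_n) : K]`, so it
suffices to see that passing from `n` to `np` multiplies this degree by `p` or `p - 1`. If `p ∤ m`,
then `p` is unramified in `K(ζ_m)`, since the different divides `m`; therefore `Φ_{p ^ k}(X + 1)`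
is Eisenstein at a prime of `K(ζ_m)` above `p`, and `[K(ζ_{p ^ k m}) : K(ζ_m)] = φ(p ^ k)`.
-/

section ReductionModP

variable {A : Type*} [CommRing A] {p : ℕ} [Fact p.Prime] (φ : A →+* ZMod p) {n : ℕ}

include φ in
theorem not_dvd_expand_of_mul_eq_X_pow_sub_one {f g : A[X]} (hn : ¬ p ∣ n) (hf : f.Monic)
    (hf1 : f ≠ 1) (hfg : f * g = X ^ n - 1) : ¬ f ∣ expand A p g := by
  intro hdvd
  have hmap : f.map φ * g.map φ = X ^ n - 1 := by
    simpa using congrArg (Polynomial.map φ) hfg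
  have hcoprime : IsCoprime (f.map φ) (g.map φ) := by
    have hsep : (X ^ n - 1 : (ZMod p)[X]).Separable :=
      X_pow_sub_one_separable_iff.2 (by rwa [Ne, ZMod.natCast_eq_zero_iff])
    exact (hmap ▸ hsep).isCoprime
  have hdvd_pow : f.map φ ∣ g.map φ ^ p := by
    simpa [map_expand, ZMod.expand_card] using Polynomial.map_dvd φ hdvd
  have hunit : IsUnit (f.map φ) := hcoprime.pow_right.isUnit_of_dvd' dvd_rfl hdvd_pow
  exact hf1 (hf.natDegree_eq_zero.1 (hf.natDegree_map φ ▸ natDegree_eq_zero_of_isUnit hunit))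

variable {K : Type*} [IsIntegrallyClosed A] [Field K] [Algebra A K]
  [IsFractionRing A K]

include φ in
theorem dvd_expand_of_dvd_X_pow_sub_one {F : K[X]} (hF : Irreducible F) (hmonic : F.Monic)
    (hn : ¬ p ∣ n) (hdvd : F ∣ X ^ n - 1) : F ∣ expand K p F := by
  have hXn : (X ^ n - 1 : A[X]).Monic := monic_X_pow_sub_C 1 (by rintro rfl; simp at hn)
  obtain ⟨f, hfF⟩ := IsIntegrallyClosed.eq_map_mul_C_of_dvd K hXn (g := F) (by simpa using hdvd)
  rw [hmonic.leadingCoeff, C_1, mul_one] at hfF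
  have hf : f.Monic := monic_of_injective (IsFractionRing.injective A K) (hfF ▸ hmonic)
  obtain ⟨g, hfg⟩ : f ∣ X ^ n - 1 :=
    hXn.dvd_of_fraction_map_dvd_fraction_map (K := K) hf (by simpa [hfF] using hdvd)
  have hg : g.Monic := hf.of_mul_monic_left (hfg ▸ hXn)
  have hprod : F ∣ expand K p F * expand K p (g.map (algebraMap A K)) := by
    have hexp : X ^ n - 1 ∣ expand K p (X ^ n - 1) := by
      simpa [← pow_mul, mul_comm p n] using pow_one_sub_dvd_pow_mul_sub_one (X : K[X]) n p
    have hFg : X ^ n - 1 = F * g.map (algebraMap A K) := by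
      simpa [hfF] using congrArg (Polynomial.map (algebraMap A K)) hfg
    rw [← map_mul, ← hFg]
    exact hdvd.trans hexp
  refine (hF.prime.dvd_or_dvd hprod).resolve_right fun hdvd_expand ↦ ?_
  refine not_dvd_expand_of_mul_eq_X_pow_sub_one φ hn hf ?_ hfg.symm ?_
  · rintro rfl
    exact hF.ne_one (by simp [← hfF])
  · refine (hg.expand (Fact.out : p.Prime).pos).dvd_of_fraction_map_dvd_fraction_map (K := K) hf ?_
    rwa [hfF, map_expand]

end ReductionModP

section Unramified

variable (A K : Type*) {B : Type*} (L : Type*) [CommRing A] [Field K] [CommRing B] [Field L]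
  [Algebra A K] [Algebra B L] [Algebra A B] [Algebra K L] [Algebra A L] [IsScalarTower A K L]
  [IsScalarTower A B L] [IsFractionRing A K] [FiniteDimensional K L] [Algebra.IsSeparable K L]
  [IsIntegralClosure B A L] [IsDedekindDomain B] [Module.IsTorsionFree A B]

theorem natCast_mem_differentIdeal_of_pow_eq_one [IsDomain A] [IsIntegrallyClosed A] {z : B}
    {m : ℕ} (hz : z ^ m = 1) (hgen : Algebra.adjoin K {algebraMap B L z} = ⊤) :
    (m : B) ∈ differentIdeal A B := by
  rcases eq_or_ne m 0 with rfl | hm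
  · simp
  obtain ⟨g, hg⟩ : minpoly A z ∣ X ^ m - 1 :=
    minpoly.isIntegrallyClosed_dvd (IsIntegralClosure.isIntegral A L z) (by simp [hz])
  have hder : (m : B) * z ^ (m - 1) = aeval z (derivative (minpoly A z)) * aeval z g := by
    simpa [derivative_mul, derivative_X_pow] using congrArg (fun f ↦ aeval z (derivative f)) hg
  rw [← Ideal.mul_unit_mem_iff_mem _ ((IsUnit.of_pow_eq_one hz hm).pow (m - 1)), hder]
  exact Ideal.mul_mem_right _ _ (aeval_derivative_mem_differentIdeal A K L z hgen)

theorem natCast_notMem_sq_of_pow_eq_one [IsFractionRing B L] [IsDedekindDomain A]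
    [Module.Finite A B] {p m : ℕ} [Fact p.Prime] (hp : Prime (p : A)) (hm : ¬ p ∣ m) {z : B}
    (hz : z ^ m = 1) (hgen : Algebra.adjoin K {algebraMap B L z} = ⊤) {P : Ideal B}
    [hP : P.IsPrime] (hpP : (p : B) ∈ P) : (p : B) ∉ P ^ 2 := by
  intro hpP2
  have : (Ideal.span {(p : A)}).IsMaximal :=
    ((Ideal.span_singleton_prime hp.ne_zero).2 hp).isMaximal (by simpa using hp.ne_zero)
  have hdvd : P ^ (2 - 1) ∣ differentIdeal A B := by
    refine pow_sub_one_dvd_differentIdeal_aux A K L (p := Ideal.span {(p : A)}) P two_ne_zero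
      (by simpa using hp.ne_zero) ?_
    simpa [Ideal.dvd_iff_le, Ideal.map_span, Ideal.span_le] using hpP2
  have hmP : (m : B) ∈ P := by
    rw [pow_one, Ideal.dvd_iff_le] at hdvd
    exact hdvd (natCast_mem_differentIdeal_of_pow_eq_one A K L hz hgen)
  obtain ⟨a, b, hab⟩ : IsCoprime (p : B) (m : B) :=
    (((Fact.out : p.Prime).coprime_iff_not_dvd).2 hm).cast
  exact hP.one_notMem (hab ▸ P.add_mem (P.mul_mem_left a hpP) (P.mul_mem_left b hmP))

end Unramified

theorem charZero_of_prime_natCast {A K : Type*} [CommRing A] [Field K] [Algebra A K]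
    [FaithfulSMul A K] {p : ℕ} (hp : Prime (p : A)) : CharZero K := by
  obtain ⟨q, _⟩ := CharP.exists K
  rcases CharP.char_is_prime_or_zero K q with hq | rfl
  · have : CharP A q :=
      ((algebraMap A K).charP_iff (FaithfulSMul.algebraMap_injective A K) q).2 inferInstance
    refine absurd ((CharP.isUnit_natCast_iff hq).2 fun hqp ↦ hp.ne_zero ?_) hp.not_isUnit
    exact (CharP.cast_eq_zero_iff A q p).2 hqp
  · exact CharP.charP_to_charZero K

section Eisenstein

variable {p : ℕ} [Fact p.Prime]

theorem irreducible_cyclotomic_prime_pow_succ_of_notMem_sq {B : Type*} [CommRing B] [IsDomain B]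
    {P : Ideal B} [hP : P.IsPrime] (hpP : (p : B) ∈ P) (hpP2 : (p : B) ∉ P ^ 2) (k : ℕ) :
    Irreducible (cyclotomic (p ^ (k + 1)) B) := by
  set f := (cyclotomic (p ^ (k + 1)) B).comp (X + 1) with hf
  have hmonic : f.Monic := (cyclotomic.monic _ B).comp_X_add_C 1
  have hdeg : 0 < f.natDegree := by
    have hX : (X + 1 : B[X]).natDegree = 1 := natDegree_X_add_C 1
    rw [hf, natDegree_comp, hX, mul_one, natDegree_cyclotomic]
    exact Nat.totient_pos.2 (pow_pos (Fact.out : p.Prime).pos _)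
  have hweak : f.IsWeaklyEisensteinAt P := by
    have hmap : ((cyclotomic (p ^ (k + 1)) ℤ).comp (X + 1)).map (Int.castRingHom B) = f := by
      simp [hf, Polynomial.map_comp]
    have hle : (Ideal.span {(p : ℤ)}).map (Int.castRingHom B) ≤ P := by
      simpa [Ideal.map_span, Ideal.span_le] using hpP
    have hspan := (cyclotomic_prime_pow_comp_X_add_one_isEisensteinAt p k).isWeaklyEisensteinAt.map
      (Int.castRingHom B)
    exact ⟨fun hi ↦ hle ((hmap ▸ hspan).mem hi)⟩
  have heis : f.IsEisensteinAt P := by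
    refine hmonic.isEisensteinAt_of_mem_of_notMem hP.ne_top hweak.mem ?_
    simpa [hf, coeff_zero_eq_eval_zero, eval_comp, eval_one_cyclotomic_prime_pow] using hpP2
  refine (MulEquiv.irreducible_iff (algEquivAevalXAddC (1 : B))).1 ?_
  simpa [hf, comp, aeval_def] using heis.irreducible hP hmonic.isPrimitive hdeg

variable {A : Type*} (K : Type*) [CommRing A] [IsDedekindDomain A] [Field K] [Algebra A K]
  [IsFractionRing A K]

include K in
theorem irreducible_cyclotomic_prime_pow_of_isCyclotomicExtension (hp : Prime (p : A)) {m : ℕ}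
    (hm : ¬ p ∣ m) (k : ℕ) (E : Type*) [Field E] [Algebra K E] [IsCyclotomicExtension {m} K E] :
    Irreducible (cyclotomic (p ^ k) E) := by
  rcases k with _ | k
  · simpa using irreducible_X_sub_C (1 : E)
  have : NeZero m := ⟨by rintro rfl; simp at hm⟩
  have : CharZero K := charZero_of_prime_natCast hp
  have : FiniteDimensional K E := IsCyclotomicExtension.finiteDimensional {m} K E
  let : Algebra A E := Algebra.compHom E (algebraMap A K)
  have : IsScalarTower A K E := .of_algebraMap_eq fun _ ↦ rfl
  let B := integralClosure A E
  have : IsDedekindDomain B := integralClosure.isDedekindDomain A K E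
  have : IsFractionRing B E := IsIntegralClosure.isFractionRing_of_finite_extension A K E B
  have : Module.Finite A B := IsIntegralClosure.finite A K E B
  have : Module.IsTorsionFree A E := .trans_faithfulSMul A K E
  have : (Ideal.span {(p : A)}).IsMaximal :=
    ((Ideal.span_singleton_prime hp.ne_zero).2 hp).isMaximal (by simpa using hp.ne_zero)
  obtain ⟨P, _, _⟩ :=
    Ideal.exists_maximal_ideal_liesOver_of_isIntegral (S := B) (Ideal.span {(p : A)})
  have hpP : (p : B) ∈ P := by
    simpa using (P.mem_of_liesOver (Ideal.span {(p : A)}) p).1 (Ideal.mem_span_singleton_self _)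
  have hζ := IsCyclotomicExtension.zeta_spec m K E
  let z : B := ⟨_, (hζ.isIntegral (NeZero.pos m)).tower_top⟩
  have hpP2 : (p : B) ∉ P ^ 2 :=
    natCast_notMem_sq_of_pow_eq_one A K E hp hm (z := z) (Subtype.ext hζ.pow_eq_one)
      (IsCyclotomicExtension.adjoin_primitive_root_eq_top hζ) hpP
  simpa using ((cyclotomic.monic _ B).irreducible_iff_irreducible_map_fraction_map (K := E)).1
    (irreducible_cyclotomic_prime_pow_succ_of_notMem_sq hpP hpP2 k)

end Eisenstein

section CyclotomicTower

variable {m r : ℕ}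

theorem isPrimitiveRoot_mul_of_coprime {M : Type*} [CommMonoid M] {ζ η : M}
    (hζ : IsPrimitiveRoot ζ m) (hη : IsPrimitiveRoot η r) (h : m.Coprime r) :
    IsPrimitiveRoot (ζ * η) (m * r) := by
  rw [hζ.eq_orderOf, hη.eq_orderOf] at h ⊢
  exact IsPrimitiveRoot.iff_orderOf.2 ((Commute.all ζ η).orderOf_mul_eq_mul_orderOf_of_coprime h)

variable [NeZero m] [NeZero r]

theorem isCyclotomicExtension_mul_of_coprime (A B C : Type*) [CommRing A] [CommRing B]
    [CommRing C] [Algebra A B] [Algebra B C] [Algebra A C] [IsScalarTower A B C]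
    [FaithfulSMul B C] [IsCyclotomicExtension {m} A B] [IsCyclotomicExtension {r} B C]
    (h : r.Coprime m) : IsCyclotomicExtension {r * m} A C := by
  have hinj : Function.Injective (algebraMap B C) := FaithfulSMul.algebraMap_injective B C
  have hunion : IsCyclotomicExtension ({m} ∪ {r}) A C := .trans {m} {r} A B C hinj
  refine (IsCyclotomicExtension.iff_adjoin_eq_top _ _ _).2 ⟨?_, top_unique ?_⟩
  · rintro _ rfl -
    exact ⟨_, isPrimitiveRoot_mul_of_coprime (IsCyclotomicExtension.zeta_spec r B C)
      ((IsCyclotomicExtension.zeta_spec m A B).map_of_injective hinj) h⟩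
  · rw [← ((IsCyclotomicExtension.iff_adjoin_eq_top _ _ _).1 hunion).2]
    refine Algebra.adjoin_mono fun b ⟨n, hn, _, hb⟩ ↦
      ⟨r * m, rfl, mul_ne_zero (NeZero.ne r) (NeZero.ne m), ?_⟩
    rcases hn with rfl | rfl
    · rw [mul_comm, pow_mul, hb, one_pow]
    · rw [pow_mul, hb, one_pow]

theorem finrank_eq_totient_mul_of_coprime (K E L M : Type*) [Field K] [Field E] [Field L] [Field M]
    [Algebra K E] [Algebra E L] [Algebra K L] [IsScalarTower K E L] [Algebra K M]
    [IsCyclotomicExtension {m} K E] [IsCyclotomicExtension {r} E L]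
    [IsCyclotomicExtension {r * m} K M] (h : r.Coprime m) (hirr : Irreducible (cyclotomic r E)) :
    Module.finrank K M = r.totient * Module.finrank K E := by
  have : IsCyclotomicExtension {r * m} K L := isCyclotomicExtension_mul_of_coprime K E L h
  rw [(IsCyclotomicExtension.algEquiv {r * m} K M L).toLinearEquiv.finrank_eq,
    ← Module.finrank_mul_finrank K E L, IsCyclotomicExtension.finrank L hirr, mul_comm]

end CyclotomicTower

section DegreeOfFactors

variable {K : Type*} [Field K] {n : ℕ} [NeZero (n : K)] {F : K[X]}

theorem natDegree_eq_finrank_of_dvd_cyclotomic (hF : Irreducible F) (hdvd : F ∣ cyclotomic n K)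
    (L : Type*) [Field L] [Algebra K L] [IsCyclotomicExtension {n} K L] :
    F.natDegree = Module.finrank K L := by
  have : NeZero n := .of_neZero_natCast K
  have : NeZero (n : L) := NeZero.nat_of_injective (algebraMap K L).injective
  have hsplits : (F.map (algebraMap K L)).Splits :=
    (IsCyclotomicExtension.splits_cyclotomic K L (Set.mem_singleton n)).of_dvd
      ((cyclotomic.monic n K).map _).ne_zero (Polynomial.map_dvd _ hdvd)
  obtain ⟨ζ, hζ⟩ := hsplits.exists_eval_eq_zero (by simpa using hF.degree_pos.ne')
  rw [eval_map_algebraMap] at hζ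
  have hprim : IsPrimitiveRoot ζ n := by
    rw [← isRoot_cyclotomic_iff, ← map_cyclotomic n (algebraMap K L), IsRoot.def,
      eval_map_algebraMap]
    exact aeval_eq_zero_of_dvd_aeval_eq_zero hdvd hζ
  rw [(hprim.powerBasis K).finrank, hprim.powerBasis_dim K, ← minpoly.eq_of_irreducible hF hζ,
    natDegree_mul_leadingCoeff_self_inv]

theorem irreducible_of_dvd_cyclotomic_of_natDegree_eq_finrank (hdvd : F ∣ cyclotomic n K)
    (L : Type*) [Field L] [Algebra K L] [IsCyclotomicExtension {n} K L]
    (hdeg : F.natDegree = Module.finrank K L) : Irreducible F := by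
  have : NeZero n := .of_neZero_natCast K
  have : FiniteDimensional K L := IsCyclotomicExtension.finiteDimensional {n} K L
  have hF0 : F ≠ 0 := ne_zero_of_dvd_ne_zero (cyclotomic_ne_zero n K) hdvd
  have hunit : ¬ IsUnit F := not_isUnit_of_natDegree_pos F (hdeg ▸ Module.finrank_pos)
  obtain ⟨H, hH, hHF⟩ := WfDvdMonoid.exists_irreducible_factor hunit hF0
  refine (associated_of_dvd_of_natDegree_le hHF hF0 ?_).irreducible hH
  rw [hdeg, natDegree_eq_finrank_of_dvd_cyclotomic hH (hHF.trans hdvd) L]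

end DegreeOfFactors

section MulPrime

variable {A K : Type*} [CommRing A] [IsDedekindDomain A] [Field K] [Algebra A K]
  [IsFractionRing A K] {p n : ℕ} [Fact p.Prime]

theorem finrank_cyclotomicField_prime_pow_mul (hp : Prime (p : A)) (hn : ¬ p ∣ n) (k : ℕ) :
    Module.finrank K (CyclotomicField (p ^ k * n) K) =
      (p ^ k).totient * Module.finrank K (CyclotomicField n K) := by
  have : NeZero n := ⟨by rintro rfl; simp at hn⟩
  have : CharZero K := charZero_of_prime_natCast hp
  exact finrank_eq_totient_mul_of_coprime K (CyclotomicField n K)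
    (CyclotomicField (p ^ k) (CyclotomicField n K)) (CyclotomicField (p ^ k * n) K)
    (((Fact.out : p.Prime).coprime_iff_not_dvd.2 hn).pow_left k)
    (irreducible_cyclotomic_prime_pow_of_isCyclotomicExtension K hp hn k _)

theorem finrank_cyclotomicField_mul_prime_of_dvd (hp : Prime (p : A)) (hn : n ≠ 0) (h : p ∣ n) :
    Module.finrank K (CyclotomicField (n * p) K) =
      Module.finrank K (CyclotomicField n K) * p := by
  have hprime : p.Prime := Fact.out
  obtain ⟨k, m, hm, rfl⟩ := Nat.exists_eq_pow_mul_and_not_dvd hn p hprime.ne_one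
  obtain ⟨k, rfl⟩ : ∃ j, k = j + 1 :=
    Nat.exists_eq_succ_of_ne_zero fun hk ↦ hm (by simpa [hk] using h)
  rw [mul_right_comm, ← pow_succ, finrank_cyclotomicField_prime_pow_mul hp hm,
    finrank_cyclotomicField_prime_pow_mul hp hm, Nat.totient_prime_pow_succ hprime,
    Nat.totient_prime_pow_succ hprime]
  ring

theorem finrank_cyclotomicField_mul_prime_of_not_dvd (hp : Prime (p : A)) (h : ¬ p ∣ n) :
    Module.finrank K (CyclotomicField (n * p) K) =
      Module.finrank K (CyclotomicField n K) * (p - 1) := by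
  have hfinrank := finrank_cyclotomicField_prime_pow_mul (K := K) hp h 1
  rwa [pow_one, Nat.totient_prime Fact.out, mul_comm p, mul_comm (p - 1)] at hfinrank

theorem irreducible_expand_of_dvd_cyclotomic (hp : Prime (p : A)) (hn : n ≠ 0) (h : p ∣ n)
    {F : K[X]} (hF : Irreducible F) (hdvd : F ∣ cyclotomic n K) : Irreducible (expand K p F) := by
  have : CharZero K := charZero_of_prime_natCast hp
  have : NeZero n := ⟨hn⟩
  have hprime : p.Prime := Fact.out
  have hexp : expand K p F ∣ cyclotomic (n * p) K := by
    rw [← cyclotomic_expand_eq_cyclotomic hprime h]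
    exact _root_.map_dvd (expand K p) hdvd
  refine irreducible_of_dvd_cyclotomic_of_natDegree_eq_finrank hexp (CyclotomicField (n * p) K) ?_
  rw [natDegree_expand, finrank_cyclotomicField_mul_prime_of_dvd hp hn h,
    natDegree_eq_finrank_of_dvd_cyclotomic hF hdvd (CyclotomicField n K)]

theorem irreducible_of_mul_eq_expand_of_dvd_cyclotomic (hp : Prime (p : A)) (h : ¬ p ∣ n)
    {F G : K[X]} (hF : Irreducible F) (hdvd : F ∣ cyclotomic n K)
    (hG : G ∣ cyclotomic (n * p) K) (hmul : G * F = expand K p F) : Irreducible G := by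
  have : CharZero K := charZero_of_prime_natCast hp
  have : NeZero n := ⟨by rintro rfl; simp at h⟩
  have hG0 : G ≠ 0 := ne_zero_of_dvd_ne_zero (cyclotomic_ne_zero _ K) hG
  have hdeg : G.natDegree + F.natDegree = F.natDegree * p := by
    rw [← natDegree_mul hG0 hF.ne_zero, hmul, natDegree_expand]
  refine irreducible_of_dvd_cyclotomic_of_natDegree_eq_finrank hG (CyclotomicField (n * p) K) ?_
  rw [finrank_cyclotomicField_mul_prime_of_not_dvd hp h,
    ← natDegree_eq_finrank_of_dvd_cyclotomic hF hdvd (CyclotomicField n K), Nat.mul_sub_one,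
    ← hdeg, Nat.add_sub_cancel]

end MulPrime

section Factorization

variable {A K ι : Type*} [CommRing A] [IsDedekindDomain A] [Field K] [Algebra A K]
  [IsFractionRing A K] [Fintype ι] {p n : ℕ} [Fact p.Prime] {F G : ι → K[X]}

theorem cyclotomic_mul_p_factorization_of_dvd (hp : Prime (p : A)) (hn : n ≠ 0) (h : p ∣ n)
    (hmonic : ∀ i, (F i).Monic) (hirr : ∀ i, Irreducible (F i))
    (hfact : cyclotomic n K = ∏ i, F i) :
    cyclotomic (n * p) K = ∏ i, expand K p (F i) ∧
      (∀ i, (expand K p (F i)).Monic) ∧ ∀ i, Irreducible (expand K p (F i)) := by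
  have hprime : p.Prime := Fact.out
  have hdvd (i : ι) : F i ∣ cyclotomic n K := hfact ▸ Finset.dvd_prod_of_mem F (Finset.mem_univ i)
  refine ⟨?_, fun i ↦ (hmonic i).expand hprime.pos,
    fun i ↦ irreducible_expand_of_dvd_cyclotomic hp hn h (hirr i) (hdvd i)⟩
  rw [← cyclotomic_expand_eq_cyclotomic hprime h, hfact, map_prod]

theorem cyclotomic_mul_p_factorization_of_not_dvd (hp : Prime (p : A)) (φ : A →+* ZMod p)
    (h : ¬ p ∣ n) (hmonic : ∀ i, (F i).Monic) (hirr : ∀ i, Irreducible (F i))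
    (hfact : cyclotomic n K = ∏ i, F i) :
    cyclotomic (n * p) K = ∏ i, expand K p (F i) / F i ∧
      (∀ i, (expand K p (F i) / F i).Monic) ∧ ∀ i, Irreducible (expand K p (F i) / F i) := by
  have hprime : p.Prime := Fact.out
  have hdvd (i : ι) : F i ∣ cyclotomic n K := hfact ▸ Finset.dvd_prod_of_mem F (Finset.mem_univ i)
  have hmul (i : ι) : expand K p (F i) / F i * F i = expand K p (F i) := by
    rw [mul_comm]
    exact EuclideanDomain.mul_div_cancel' (hirr i).ne_zero <| dvd_expand_of_dvd_X_pow_sub_one φ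
      (hirr i) (hmonic i) h ((hdvd i).trans (cyclotomic.dvd_X_pow_sub_one n K))
  have hprod : cyclotomic (n * p) K = ∏ i, expand K p (F i) / F i := by
    refine mul_right_cancel₀ (cyclotomic_ne_zero n K) ?_
    rw [← cyclotomic_expand_eq_cyclotomic_mul hprime h, hfact, map_prod, ← Finset.prod_mul_distrib]
    exact Finset.prod_congr rfl fun i _ ↦ (hmul i).symm
  refine ⟨hprod, fun i ↦ ?_, fun i ↦ ?_⟩
  · exact (hmonic i).of_mul_monic_right ((hmul i).symm ▸ (hmonic i).expand hprime.pos)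
  · exact irreducible_of_mul_eq_expand_of_dvd_cyclotomic hp h (hirr i) (hdvd i)
      (hprod ▸ Finset.dvd_prod_of_mem _ (Finset.mem_univ i)) (hmul i)

theorem cyclotomic_mul_p_factorization_general (hp : Prime (p : A)) (φ : A →+* ZMod p)
    (hn : n ≠ 0) (hmonic : ∀ i, (F i).Monic) (hirr : ∀ i, Irreducible (F i))
    (hfact : cyclotomic n K = ∏ i, F i)
    (hG : ∀ i, G i = if p ∣ n then expand K p (F i) else expand K p (F i) / F i) :
    cyclotomic (n * p) K = ∏ i, G i ∧ (∀ i, (G i).Monic) ∧ ∀ i, Irreducible (G i) := by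
  obtain rfl : G = fun i ↦ if p ∣ n then expand K p (F i) else expand K p (F i) / F i := funext hG
  by_cases h : p ∣ n
  · simpa only [if_pos h] using cyclotomic_mul_p_factorization_of_dvd hp hn h hmonic hirr hfact
  · simpa only [if_neg h] using cyclotomic_mul_p_factorization_of_not_dvd hp φ h hmonic hirr hfact

end Factorization

/-- Let `p` be a prime and `n ≥ 1`. Suppose `Φ_n = F_1 ⋯ F_t` is the factorization of the
`n`-th cyclotomic polynomial into monic irreducible polynomials over `ℚ_p`. For each `i` set
`G_i = F_i(X^p)` if `p ∣ n` and `G_i = F_i(X^p)/F_i(X)` otherwise. Then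
`Φ_{np} = G_1 ⋯ G_t` is the factorization of `Φ_{np}` into monic irreducible polynomials
over `ℚ_p`. -/
theorem cyclotomic_mul_p_factorization
    (p : ℕ) [Fact p.Prime] (n : ℕ) (hn : 1 ≤ n) (t : ℕ)
    (F : Fin t → Polynomial ℚ_[p])
    (hmonic : ∀ i, (F i).Monic) (hirr : ∀ i, Irreducible (F i))
    (hfact : cyclotomic n ℚ_[p] = ∏ i, F i)
    (G : Fin t → Polynomial ℚ_[p])
    (hG : ∀ i, G i = if p ∣ n then expand ℚ_[p] p (F i)
      else expand ℚ_[p] p (F i) / F i) :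
    cyclotomic (n * p) ℚ_[p] = ∏ i, G i ∧
      (∀ i, (G i).Monic) ∧ (∀ i, Irreducible (G i)) :=
  cyclotomic_mul_p_factorization_general PadicInt.prime_p PadicInt.toZMod
    (Nat.one_le_iff_ne_zero.1 hn) hmonic hirr hfact hG
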